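/- Let ℓ, C be fixed with C ≥ 1, δ ∈ (0,1), let γ' = 1/(4(ℓ+1)), c = γ'δ/(10C) and γ = γ'/(2C). Then for every sufficiently large n, every tree T on n vertices with Δ(T) ≤ cn/log(n) satisfies at least one of: (i) T has at least γn vertex-disjoint bare paths of length ℓ; (ii) T has at least Cγn leaves and there is a subtree T' ⊆ T with v(T') ≤ δn and |V(T') ∩ N_T(L(T))| ≥ C log(n). -/

import Mathlib

/-!
The proof splits on the number of leaves, the threshold being `n / (8 (ℓ + 1)) = C γ n`.

*Few leaves.* Root the tree at a leaf `r`, let `p` be the parent map and `D` the set of vertices of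
degree two. A tree with `a` leaves has at most `2 a` vertices outside `D` (`card_degree_ne_two_le`).
Each vertex of `D` has exactly one child, so all but `ℓ |Dᶜ|` vertices `v` satisfy
`p v, …, p^[ℓ] v ∈ D` (`card_le_card_long`), and for each such `v` the chain `v, p v, …, p^[ℓ] v` is a
bare path. Keeping only the `v` whose depth lies in one residue class modulo `ℓ + 1` makes these
chains disjoint (`windows_disjoint`), since a common vertex then has to occur at the same position in
both chains. The most frequent residue class gives at least `(n - 2 ℓ a) / (ℓ + 1)` disjoint bare
paths (`exists_bare_paths`).

*Many leaves.* By the degree bound the set `P` of neighbours of leaves has at least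
`5 C log n / δ` elements (`card_leaves_le`). A depth-first tour is a walk with at most `2 n - 1`
terms visiting all vertices (`exists_tour`). It is covered by at most `5 / δ` segments of `⌊δ n⌋`
consecutive terms, each of which spans a subtree, and one of them contains at least `C log n` elements
of `P` (`exists_subtree`).
-/

namespace BarePaths
open SimpleGraph

/-! ### Descending chains of a parent map -/

section Descent
variable {V : Type*}

/-- If vertices of `D` have at most one `p`-preimage, a vertex is determined by its `k`-th image as
long as its iterates up to that point stay in `D`. -/
lemma iterate_injOn (p : V → V) (D : Finset V)
    (hinj : ∀ u v, p u ∈ D → p u = p v → u = v) :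
    ∀ (k : ℕ) (u v : V), (∀ i, 1 ≤ i → i ≤ k → p^[i] u ∈ D) → p^[k] u = p^[k] v → u = v := by
  intro k
  induction k with
  | zero => intro u v _ h; simpa using h
  | succ k ih =>
    intro u v hu h
    have hk := hu (k + 1) (by omega) le_rfl
    rw [Function.iterate_succ_apply'] at hk h
    rw [Function.iterate_succ_apply'] at h
    exact ih u v (fun i h1 h2 => hu i h1 (by omega)) (hinj _ _ hk h)

lemma card_not_mem_le [Fintype V] [DecidableEq V] (p : V → V) (D : Finset V) (hsurj : ∀ x ∈ D, ∃ y, p y = x) :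
    (Finset.univ.filter fun y => p y ∉ D).card ≤ Dᶜ.card := by
  have h1 : D.card ≤ (Finset.univ.filter fun y => p y ∈ D).card := by
    have : D ⊆ (Finset.univ.filter fun y => p y ∈ D).image p := by
      intro x hx
      obtain ⟨y, rfl⟩ := hsurj x hx
      exact Finset.mem_image.2 ⟨y, by simpa using hx, rfl⟩
    exact (Finset.card_le_card this).trans Finset.card_image_le
  have h2 := Finset.card_filter_add_card_filter_not (s := (Finset.univ : Finset V)) (fun y => p y ∈ D)
  have h3 := Finset.card_add_card_compl D
  rw [Finset.card_univ] at h2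
  omega

open Classical in
/-- All but at most `k * |Dᶜ|` vertices have their first `k` iterates in `D`: at each step the number
of newly lost vertices is at most the number of vertices sent outside `D`. -/
lemma card_le_card_long [Fintype V] (p : V → V) (D : Finset V)
    (hinj : ∀ u v, p u ∈ D → p u = p v → u = v) (hsurj : ∀ x ∈ D, ∃ y, p y = x) (k : ℕ) :
    Fintype.card V ≤
      (Finset.univ.filter fun v => ∀ i, 1 ≤ i → i ≤ k → p^[i] v ∈ D).card + k * Dᶜ.card := by
  induction k with
  | zero =>
    have : (Finset.univ.filter fun v : V => ∀ i, 1 ≤ i → i ≤ 0 → p^[i] v ∈ D) = Finset.univ := by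
      ext v; simp; intro i h1 h2; omega
    rw [this, Finset.card_univ]; omega
  | succ k ih =>
    set G := Finset.univ.filter fun v => ∀ i, 1 ≤ i → i ≤ k → p^[i] v ∈ D
    set G' := Finset.univ.filter fun v => ∀ i, 1 ≤ i → i ≤ k + 1 → p^[i] v ∈ D
    -- a vertex lost at step `k + 1` is recovered from its `k`-th image
    have hlost : (G \ G').card ≤ (Finset.univ.filter fun y => p y ∉ D).card := by
      apply Finset.card_le_card_of_injOn (p^[k])
      · intro v hv
        simp only [G, G', Finset.coe_sdiff, Set.mem_sdiff, Finset.mem_coe, Finset.mem_filter,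
          Finset.mem_univ, true_and] at hv ⊢
        intro hD
        apply hv.2
        intro i h1 h2
        rcases Nat.lt_or_ge k i with h | h
        · obtain rfl : i = k + 1 := by omega
          rwa [Function.iterate_succ_apply']
        · exact hv.1 i h1 h
      · intro u hu v hv huv
        have := (Finset.mem_sdiff.1 hu).1
        exact iterate_injOn p D hinj k u v (by simpa [G] using this) huv
    have h1 := card_not_mem_le p D hsurj
    have h2 : G.card ≤ (G \ G').card + G'.card := by
      have := Finset.card_le_card_sdiff_add_card (s := G) (t := G')
      exact this
    have : (k + 1) * Dᶜ.card = k * Dᶜ.card + Dᶜ.card := by ring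
    omega

/-- If each vertex's `p`-image inside `D` has depth one less, the windows `v, p v, …, p^[k] v` whose
starting depths agree modulo `k + 1` are disjoint. -/
lemma windows_disjoint (p : V → V) (d : V → ℕ) (D : Finset V)
    (hd : ∀ v, p v ∈ D → d (p v) + 1 = d v)
    (hinj : ∀ u v, p u ∈ D → p u = p v → u = v) (k : ℕ) (u v : V)
    (hu : ∀ i, 1 ≤ i → i ≤ k → p^[i] u ∈ D) (hv : ∀ i, 1 ≤ i → i ≤ k → p^[i] v ∈ D)
    (hmod : d u % (k + 1) = d v % (k + 1)) (i j : ℕ) (hi : i ≤ k) (hj : j ≤ k)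
    (h : p^[i] u = p^[j] v) : u = v := by
  have key : ∀ w, (∀ i, 1 ≤ i → i ≤ k → p^[i] w ∈ D) → ∀ i ≤ k, d (p^[i] w) + i = d w := by
    intro w hw i
    induction i with
    | zero => intro _; rfl
    | succ i ih =>
      intro hi
      have := hw (i + 1) (by omega) hi
      rw [Function.iterate_succ_apply'] at this ⊢
      have := hd _ this
      have := ih (by omega)
      omega
  have e1 := key u hu i hi
  have e2 := key v hv j hj
  rw [h] at e1
  have hij : i = j := by
    have hm : i ≡ j [MOD (k + 1)] := by
      apply Nat.ModEq.add_left_cancel' (d (p^[j] v))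
      rw [e1, e2]; exact hmod
    exact hm.eq_of_lt_of_lt (by omega) (by omega)
  subst hij
  exact iterate_injOn p D hinj i u v (fun a h1 h2 => hu a h1 (by omega)) h

end Descent

/-! ### Bare paths in trees with few leaves -/

section Tree
variable {V : Type*}

/-- A parent map for the tree rooted at `r`, with the convention that `r` is its own parent; every
edge joins a vertex to its parent. -/
lemma exists_parent {T : SimpleGraph V} (hT : T.IsTree) (r : V) :
    ∃ p : V → V, p r = r ∧ (∀ v, v ≠ r → T.Adj v (p v) ∧ T.dist r (p v) + 1 = T.dist r v) ∧
      ∀ u v, T.Adj u v → p u = v ∨ p v = u := by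
  classical
  choose P hP hlen using fun v => hT.connected.exists_path_of_dist r v
  have huniq : ∀ u v, T.Adj u v → T.dist r v = T.dist r u + 1 → (P v).penultimate = u := by
    intro u v huv hd
    refine (hT.isAcyclic.eq_penultimate_of_adj_end (hP v) huv.symm ?_).symm
    apply hT.isAcyclic.mem_support_of_ne_mem_support_of_adj_of_isPath (hP v) (hP u) huv.symm
    intro hv
    have h1 := (P u).length_takeUntil_le_length hv
    have h2 := T.dist_le ((P u).takeUntil v hv)
    have h3 := hlen u
    omega
  refine ⟨fun v => (P v).penultimate, ?_, ?_, ?_⟩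
  · have h0 : (P r).length = 0 := by rw [hlen, SimpleGraph.dist_self]
    simp [Walk.penultimate, h0]
  · intro v hv
    have hnil : ¬ (P v).Nil := fun h => hv h.eq.symm
    have hadj := (P v).adj_penultimate hnil
    refine ⟨hadj.symm, ?_⟩
    rcases hT.dist_eq_dist_add_one_of_adj r hadj with h | h
    · exfalso
      have h1 := T.dist_le (P v).dropLast
      have h2 : (P v).dropLast.length + 1 = (P v).length := by
        simp [Walk.dropLast, Walk.take_length]
        have := Walk.not_nil_iff_lt_length.1 hnil
        omega
      have h3 := hlen v
      omega
    · exact h.symm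
  · intro u v huv
    rcases hT.dist_eq_dist_add_one_of_adj r huv with h | h
    · left; exact huniq v u huv.symm h
    · right; exact huniq u v huv h

/-- The walk `v, p v, …, p^[k] v`; it is geodesic, hence a path, as the distance to the root drops at
each step. -/
lemma exists_ancestral_path {T : SimpleGraph V} (hT : T.IsTree) (r : V) (p : V → V)
    (hp : ∀ v, v ≠ r → T.Adj v (p v) ∧ T.dist r (p v) + 1 = T.dist r v) (k : ℕ) (v : V)
    (hv : ∀ i < k, p^[i] v ≠ r) :
    ∃ w : T.Walk v (p^[k] v), w.IsPath ∧ w.length = k ∧ ∀ x ∈ w.support, ∃ i ≤ k, x = p^[i] v := by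
  have main : ∀ k v, (∀ i < k, p^[i] v ≠ r) → ∃ w : T.Walk v (p^[k] v), w.length = k ∧
      T.dist r (p^[k] v) + k = T.dist r v ∧ ∀ x ∈ w.support, ∃ i ≤ k, x = p^[i] v := by
    intro k
    induction k with
    | zero =>
      intro v _
      exact ⟨Walk.nil, rfl, rfl, fun x hx => ⟨0, le_rfl, by simpa using hx⟩⟩
    | succ k ih =>
      intro v hv
      obtain ⟨w, hw, hd, hs⟩ := ih (p v) (fun i hi => hv (i + 1) (by omega))
      have h0 := hp v (hv 0 (by omega))
      refine ⟨Walk.cons h0.1 w, by simp [hw], ?_, ?_⟩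
      · rw [Function.iterate_succ_apply]; omega
      · intro x hx
        rcases List.mem_cons.1 hx with rfl | hx
        · exact ⟨0, by omega, rfl⟩
        · obtain ⟨i, hi, rfl⟩ := hs x hx
          exact ⟨i + 1, by omega, rfl⟩
  obtain ⟨w, hw, hd, hs⟩ := main k v hv
  refine ⟨w, w.isPath_of_length_eq_dist ?_, hw, hs⟩
  have h1 := T.dist_le w
  have h2 := hT.connected.dist_triangle (u := r) (v := p^[k] v) (w := v)
  rw [T.dist_comm (u := p^[k] v)] at h2
  omega

/-- In a nontrivial tree the vertices of degree other than two are at most twice as many as the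
leaves, because the degrees sum to less than `2 |V|`. -/
lemma card_degree_ne_two_le [Fintype V] [Nontrivial V] {T : SimpleGraph V} [DecidableRel T.Adj]
    (hT : T.IsTree) :
    (Finset.univ.filter fun v => T.degree v ≠ 2).card ≤
      2 * (Finset.univ.filter fun v => T.degree v = 1).card := by
  have hsum := T.sum_degrees_eq_twice_card_edges
  have hE := hT.card_edgeFinset
  have hpos : ∀ v, 0 < T.degree v := fun v =>
    hT.connected.preconnected.degree_pos_of_nontrivial v
  -- pointwise `3 ≤ deg v + 2·[deg v = 1] + [deg v = 2]`
  have h1 : ∑ v : V, 3 ≤ ∑ v, (T.degree v + 2 * (if T.degree v = 1 then 1 else 0)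
      + (if T.degree v = 2 then 1 else 0)) := by
    apply Finset.sum_le_sum
    intro v _
    have := hpos v
    split_ifs <;> omega
  rw [Finset.sum_add_distrib, Finset.sum_add_distrib, ← Finset.mul_sum, ← Finset.card_filter,
    ← Finset.card_filter, hsum] at h1
  have h2 := Finset.card_filter_add_card_filter_not (s := (Finset.univ : Finset V))
    (fun v => T.degree v = 2)
  simp only [Finset.sum_const, smul_eq_mul, Finset.card_univ] at h1 h2
  simp only [ne_eq]
  omega

/-- A tree with `a` leaves has a family of `t ≥ (|V| - 2 k a) / (k + 1)` vertex-disjoint bare paths of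
length `k`. -/
lemma exists_bare_paths [Fintype V] [Nontrivial V] {T : SimpleGraph V} [DecidableRel T.Adj]
    (hT : T.IsTree) (k : ℕ) :
    ∃ (t : ℕ) (f : Fin t → Σ u : V, Σ v : V, T.Walk u v),
      Fintype.card V ≤ (k + 1) * t
        + 2 * k * (Finset.univ.filter fun v => T.degree v = 1).card ∧
      (∀ i, (f i).2.2.IsPath ∧ (f i).2.2.length = k ∧
        ∀ w ∈ (f i).2.2.support, w ≠ (f i).1 → w ≠ (f i).2.1 → T.degree w = 2) ∧
      (∀ i j, i ≠ j → List.Disjoint (f i).2.2.support (f j).2.2.support) := by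
  classical
  -- rooting at a leaf keeps the root out of `D`
  obtain ⟨r, hr⟩ := hT.exists_vert_degree_one_of_nontrivial
  obtain ⟨p, hpr, hp, hadj⟩ := exists_parent hT r
  set D := Finset.univ.filter fun v => T.degree v = 2 with hD
  have hrD : r ∉ D := by simp [hD, hr]
  have hne : ∀ v, p v ∈ D → v ≠ r := by
    rintro v hv rfl
    exact hrD (hpr ▸ hv)
  -- the children of `x ∈ D` are its neighbours other than `p x`
  have hchild : ∀ x ∈ D, ∃ y, p y = x ∧ ∀ z, p z = x → z = y := by
    intro x hx
    have hxr : x ≠ r := fun h => hrD (h ▸ hx)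
    have hpx := hp x hxr
    have hcard : ((T.neighborFinset x).erase (p x)).card = 1 := by
      rw [Finset.card_erase_of_mem (by simpa using hpx.1), T.card_neighborFinset_eq_degree]
      have : T.degree x = 2 := by simpa [hD] using hx
      omega
    obtain ⟨y, hy⟩ := Finset.card_eq_one.1 hcard
    refine ⟨y, ?_, ?_⟩
    · have : y ∈ (T.neighborFinset x).erase (p x) := by simp [hy]
      simp only [Finset.mem_erase, mem_neighborFinset] at this
      exact (hadj x y this.2).resolve_left (fun h => this.1 h.symm)
    · intro z hz
      have hz' := hp z (hne z (hz ▸ hx))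
      rw [hz] at hz'
      have : z ∈ (T.neighborFinset x).erase (p x) := by
        simp only [Finset.mem_erase, mem_neighborFinset]
        refine ⟨?_, hz'.1.symm⟩
        rintro rfl
        omega
      simpa [hy] using this
  have hinj : ∀ u v, p u ∈ D → p u = p v → u = v := by
    intro u v hu huv
    obtain ⟨y, _, hy⟩ := hchild _ hu
    rw [hy u rfl, hy v huv.symm]
  have hsurj : ∀ x ∈ D, ∃ y, p y = x := fun x hx => (hchild x hx).imp fun _ h => h.1
  have hlong := card_le_card_long p D hinj hsurj k
  have hDc : Dᶜ.card ≤ 2 * (Finset.univ.filter fun v => T.degree v = 1).card := by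
    have := card_degree_ne_two_le hT
    rwa [show Dᶜ = Finset.univ.filter fun v => T.degree v ≠ 2 by ext; simp [hD]]
  set G := Finset.univ.filter fun v => ∀ i, 1 ≤ i → i ≤ k → p^[i] v ∈ D with hG
  -- choose the residue of the depth modulo `k + 1` that is most frequent in `G`
  obtain ⟨c, hc⟩ : ∃ c, G.card ≤ (k + 1) * (G.filter fun v => T.dist r v % (k + 1) = c).card := by
    by_contra! hcon
    have h1 : G.card = ∑ c ∈ Finset.range (k + 1),
        (G.filter fun v => T.dist r v % (k + 1) = c).card :=
      Finset.card_eq_sum_card_fiberwise fun v _ => by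
        simpa using Nat.mod_lt _ (Nat.succ_pos k)
    have h2 : ∑ c ∈ Finset.range (k + 1), (k + 1) *
        (G.filter fun v => T.dist r v % (k + 1) = c).card < ∑ c ∈ Finset.range (k + 1), G.card :=
      Finset.sum_lt_sum_of_nonempty (by simp) fun c _ => hcon c
    rw [← Finset.mul_sum, ← h1] at h2
    simp at h2
  set F := G.filter fun v => T.dist r v % (k + 1) = c with hF
  have hFG : ∀ v ∈ F, ∀ i, 1 ≤ i → i ≤ k → p^[i] v ∈ D := by
    intro v hv
    simpa [hG] using (Finset.mem_filter.1 hv).1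
  have hwalk : ∀ v : F, ∃ w : T.Walk v.1 (p^[k] v.1), w.IsPath ∧ w.length = k ∧
      ∀ x ∈ w.support, ∃ i ≤ k, x = p^[i] v.1 := by
    intro v
    apply exists_ancestral_path hT r p hp
    intro i hi
    apply hne
    have := hFG v.1 v.2 (i + 1) (by omega) (by omega)
    rwa [Function.iterate_succ_apply'] at this
  choose W hW1 hW2 hW3 using hwalk
  refine ⟨F.card, fun i => ⟨_, _, W (F.equivFin.symm i)⟩, ?_, ?_, ?_⟩
  · have : k * Dᶜ.card ≤ k * (2 * (Finset.univ.filter fun v => T.degree v = 1).card) :=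
      Nat.mul_le_mul_left _ hDc
    have e : k * (2 * (Finset.univ.filter fun v => T.degree v = 1).card) =
      2 * k * (Finset.univ.filter fun v => T.degree v = 1).card := by ring
    omega
  · intro i
    refine ⟨hW1 _, hW2 _, ?_⟩
    intro w hw h1 _
    obtain ⟨a, ha, rfl⟩ := hW3 _ w hw
    have ha0 : a ≠ 0 := by rintro rfl; exact h1 rfl
    have := hFG _ (F.equivFin.symm i).2 a (by omega) ha
    simpa [hD] using this
  · intro i j hij x hx hy
    obtain ⟨a, ha, hxa⟩ := hW3 _ x hx
    obtain ⟨b, hb, hxb⟩ := hW3 _ x hy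
    have hi := (F.equivFin.symm i).2
    have hj := (F.equivFin.symm j).2
    have := windows_disjoint p (T.dist r) D (fun v hv => (hp v (hne v hv)).2) hinj k _ _
      (hFG _ hi) (hFG _ hj)
      ((Finset.mem_filter.1 hi).2.trans (Finset.mem_filter.1 hj).2.symm) a b ha hb
      (hxa.symm.trans hxb)
    exact hij (F.equivFin.symm.injective (Subtype.ext this))

/-! ### Small subtrees meeting many neighbours of leaves -/

/-- A walk of length at most `2 (|V| - 1)` visiting every vertex: detours `x → y → x` to unvisited
vertices `y` are inserted one at a time. -/
lemma exists_tour [Fintype V] {G : SimpleGraph V} (hG : G.Connected) :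
    ∃ (u v : V) (w : G.Walk u v), w.length + 2 ≤ 2 * Fintype.card V ∧ ∀ x, x ∈ w.support := by
  classical
  have step : ∀ m, 1 ≤ m → m ≤ Fintype.card V → ∃ (u v : V) (w : G.Walk u v),
      w.length + 2 ≤ 2 * m ∧ m ≤ w.support.toFinset.card := by
    intro m hm
    induction m, hm using Nat.le_induction with
    | base =>
      intro _
      obtain ⟨u⟩ := hG.nonempty
      exact ⟨u, u, Walk.nil, by simp, by simp⟩
    | succ m hm ih =>
      intro hcard
      obtain ⟨u, v, w, hlen, hsup⟩ := ih (by omega)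
      by_cases hbig : m + 1 ≤ w.support.toFinset.card
      · exact ⟨u, v, w, by omega, hbig⟩
      obtain ⟨z, hz⟩ : ∃ z, z ∉ w.support.toFinset := by
        by_contra! hall
        rw [Finset.eq_univ_iff_forall.2 hall, Finset.card_univ] at hbig
        exact hbig hcard
      obtain ⟨q⟩ := hG.preconnected u z
      obtain ⟨e, _, he1, he2⟩ := q.exists_boundary_dart {x | x ∈ w.support}
        (by simp) (by simpa using hz)
      simp only [Set.mem_ofPred_eq] at he1 he2
      refine ⟨u, v, (w.takeUntil e.fst he1).append
        (Walk.cons e.adj (Walk.cons e.adj.symm (w.dropUntil e.fst he1))), ?_, ?_⟩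
      · have := congrArg Walk.length (w.take_spec he1)
        simp only [Walk.length_append, Walk.length_cons] at this ⊢
        omega
      · have hsub : insert e.snd w.support.toFinset ⊆ ((w.takeUntil e.fst he1).append
            (Walk.cons e.adj (Walk.cons e.adj.symm (w.dropUntil e.fst he1)))).support.toFinset := by
          intro x hx
          rw [Finset.mem_insert, List.mem_toFinset] at hx
          rw [List.mem_toFinset, Walk.mem_support_append_iff]
          rcases hx with rfl | hx
          · right; simp
          · rw [← w.take_spec he1, Walk.mem_support_append_iff] at hx
            rcases hx with hx | hx
            · left; exact hx
            · right; simp [hx]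
        have := Finset.card_le_card hsub
        rw [Finset.card_insert_of_notMem (by simpa using he2)] at this
        omega
  have := hG.nonempty
  obtain ⟨u, v, w, h1, h2⟩ := step (Fintype.card V) Fintype.card_pos le_rfl
  refine ⟨u, v, w, h1, fun x => ?_⟩
  have := Finset.eq_univ_of_card _ (le_antisymm (Finset.card_le_univ _) h2)
  rw [← List.mem_toFinset, this]
  exact Finset.mem_univ x

/-- Some segment of `m` consecutive vertices of the tour meets `P` in at least a `1 / K` fraction. -/
lemma exists_subtree [Fintype V] {T : SimpleGraph V} (hT : T.IsTree) (P : Set V) (m K : ℕ)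
    (hm : 1 ≤ m) (hK : 2 * Fintype.card V ≤ K * m) :
    ∃ S : Set V, (T.induce S).IsTree ∧ S.ncard ≤ m ∧ P.ncard ≤ K * (S ∩ P).ncard := by
  classical
  obtain ⟨u, v, w, hlen, hall⟩ := exists_tour hT.connected
  let S : ℕ → Set V := fun j => {x | x ∈ ((w.drop (j * m)).take (m - 1)).support}
  have hcard : ∀ j, (S j).ncard ≤ m := by
    intro j
    have h1 : S j = (((w.drop (j * m)).take (m - 1)).support.toFinset : Set V) := by
      ext x; simp [S]
    rw [h1, Set.ncard_coe_finset]
    refine (List.toFinset_card_le _).trans ?_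
    rw [Walk.length_support, Walk.take_length]
    omega
  have hcover : P ⊆ ⋃ j ∈ Finset.range K, S j ∩ P := by
    intro x hx
    obtain ⟨i, rfl, hi⟩ := Walk.mem_support_iff_exists_getVert.1 (hall x)
    have hdiv : i / m < K := by
      apply Nat.div_lt_of_lt_mul
      rw [mul_comm]
      omega
    simp only [Set.mem_iUnion, Finset.mem_range]
    refine ⟨i / m, hdiv, ?_, hx⟩
    have hmod := Nat.mod_lt i hm
    have hi' := Nat.div_add_mod' i m
    have : w.getVert i = ((w.drop (i / m * m)).take (m - 1)).getVert (i % m) := by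
      rw [Walk.take_getVert, Walk.drop_getVert]
      congr 1
      rw [min_eq_right (by omega)]
      exact hi'.symm
    simp only [S, Set.mem_ofPred_eq]
    rw [this]
    exact Walk.getVert_mem_support _ _
  by_contra! hcon
  have hlt : ∀ j, K * (S j ∩ P).ncard < P.ncard := fun j =>
    hcon (S j) ⟨Walk.connected_induce_support _, hT.isAcyclic.induce _⟩ (hcard j)
  have hsum : P.ncard ≤ ∑ j ∈ Finset.range K, (S j ∩ P).ncard :=
    (Set.ncard_le_ncard hcover (Set.toFinite _)).trans (Finset.set_ncard_biUnion_le _ _)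
  have hK0 : K ≠ 0 := by
    rintro rfl
    have := hT.connected.nonempty
    have := Fintype.card_pos (α := V)
    omega
  have h1 : ∑ j ∈ Finset.range K, K * (S j ∩ P).ncard < ∑ j ∈ Finset.range K, P.ncard :=
    Finset.sum_lt_sum_of_nonempty (by simpa using hK0) fun j _ => hlt j
  rw [← Finset.mul_sum, Finset.sum_const, Finset.card_range, smul_eq_mul] at h1
  exact absurd (lt_of_mul_lt_mul_left h1 (Nat.zero_le _)) (not_lt.2 hsum)

/-- Each leaf is a neighbour of its own neighbour, so `|L(T)| ≤ |N(L(T))| * Δ(T)`. -/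
lemma card_leaves_le [Fintype V] {T : SimpleGraph V} (B : ℝ)
    (hB : ∀ v, ((T.neighborSet v).ncard : ℝ) ≤ B) :
    (({v | (T.neighborSet v).ncard = 1} : Set V).ncard : ℝ) ≤
      (({v | ∃ u, (T.neighborSet u).ncard = 1 ∧ T.Adj u v} : Set V).ncard : ℝ) * B := by
  classical
  set L : Set V := {v | (T.neighborSet v).ncard = 1} with hL
  set P : Set V := {v | ∃ u, (T.neighborSet u).ncard = 1 ∧ T.Adj u v} with hP
  have hcover : L ⊆ ⋃ v ∈ P.toFinite.toFinset, T.neighborSet v := by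
    intro u hu
    obtain ⟨v, hv⟩ := Set.ncard_eq_one.1 hu
    have huv : T.Adj u v := by
      have : v ∈ T.neighborSet u := by simp [hv]
      exact this
    simp only [Set.mem_iUnion, Set.Finite.mem_toFinset]
    exact ⟨v, ⟨u, hu, huv⟩, huv.symm⟩
  have h1 : L.ncard ≤ ∑ v ∈ P.toFinite.toFinset, (T.neighborSet v).ncard :=
    (Set.ncard_le_ncard hcover (Set.toFinite _)).trans (Finset.set_ncard_biUnion_le _ _)
  calc (L.ncard : ℝ) ≤ ∑ v ∈ P.toFinite.toFinset, ((T.neighborSet v).ncard : ℝ) := by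
        exact_mod_cast h1
    _ ≤ ∑ v ∈ P.toFinite.toFinset, B := Finset.sum_le_sum fun v _ => hB v
    _ = P.ncard * B := by
        rw [Finset.sum_const, nsmul_eq_mul, Set.ncard_eq_toFinset_card P]

end Tree
end BarePaths


/-- Classifying trees lemma with explicit constants `γ' = 1/(4(ℓ+1))`,
`c = γ'δ/(10C)`, `γ = γ'/(2C)`: for sufficiently large `n`, every tree `T` on `n`
vertices with `Δ(T) ≤ cn/log n` has at least `γn` vertex-disjoint bare paths of
length `ℓ`, or has at least `Cγn` leaves and a subtree `T'` with `v(T') ≤ δn` and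
`|V(T') ∩ N_T(L(T))| ≥ C log n`. -/
theorem stmt_18 (ℓ C : ℕ) (hℓ : 0 < ℓ) (hC : 1 ≤ C)
    (δ : ℝ) (hδ0 : 0 < δ) (hδ1 : δ < 1) :
    ∃ N : ℕ, ∀ n : ℕ, N ≤ n →
      ∀ T : SimpleGraph (Fin n), T.IsTree →
        (∀ v, ((T.neighborSet v).ncard : ℝ) ≤
            ((1 / (4 * ((ℓ : ℝ) + 1))) * δ / (10 * C)) * n / Real.log n) →
        ((∃ (t : ℕ) (f : Fin t → Σ u : Fin n, Σ v : Fin n, T.Walk u v),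
            ((1 / (4 * ((ℓ : ℝ) + 1))) / (2 * C)) * n ≤ (t : ℝ) ∧
            (∀ i, (f i).2.2.IsPath ∧ (f i).2.2.length = ℓ ∧
              ∀ w ∈ (f i).2.2.support, w ≠ (f i).1 → w ≠ (f i).2.1 →
                (T.neighborSet w).ncard = 2) ∧
            (∀ i j, i ≠ j →
              List.Disjoint (f i).2.2.support (f j).2.2.support)) ∨
          ((C : ℝ) * (((1 / (4 * ((ℓ : ℝ) + 1))) / (2 * C)) * n) ≤
              (({v | (T.neighborSet v).ncard = 1} : Set (Fin n)).ncard : ℝ) ∧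
            ∃ S : Set (Fin n), (T.induce S).IsTree ∧ (S.ncard : ℝ) ≤ δ * n ∧
              (C : ℝ) * Real.log n ≤
                ((S ∩ {v | ∃ u, (T.neighborSet u).ncard = 1 ∧ T.Adj u v}).ncard : ℝ))) := by
  classical
  refine ⟨⌈2 / δ⌉₊ + 3, fun n hn T hT hdeg => ?_⟩
  have hn3 : 3 ≤ n := by omega
  have hδn : 2 ≤ δ * n := by
    have h1 : 2 / δ ≤ n := (Nat.le_ceil _).trans (by exact_mod_cast (by omega : ⌈2 / δ⌉₊ ≤ n))
    rw [div_le_iff₀ hδ0] at h1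
    linarith
  have hn0 : (0 : ℝ) < n := by exact_mod_cast (by omega : 0 < n)
  have hlog : 0 < Real.log n := Real.log_pos (by exact_mod_cast (by omega : 1 < n))
  have hC' : (1 : ℝ) ≤ C := by exact_mod_cast hC
  have hℓ' : (1 : ℝ) ≤ ℓ := by exact_mod_cast hℓ
  have : Nontrivial (Fin n) := Fin.nontrivial_iff_two_le.2 (by omega)
  have hnd : ∀ v, (T.neighborSet v).ncard = T.degree v := fun v => by
    rw [Set.ncard_eq_toFinset_card', ← SimpleGraph.neighborFinset_def,
      SimpleGraph.card_neighborFinset_eq_degree]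
  have hleaf : ({v | (T.neighborSet v).ncard = 1} : Set (Fin n)).ncard =
      (Finset.univ.filter fun v => T.degree v = 1).card := by
    rw [← Set.ncard_coe_finset]
    congr 1
    ext v
    simp [hnd]
  have hCγ : (C : ℝ) * (((1 / (4 * ((ℓ : ℝ) + 1))) / (2 * C)) * n) = n / (8 * ((ℓ : ℝ) + 1)) := by
    field_simp
    norm_num
  rw [hCγ]
  rcases lt_or_ge (({v | (T.neighborSet v).ncard = 1} : Set (Fin n)).ncard : ℝ)
    (n / (8 * ((ℓ : ℝ) + 1))) with hfew | hmany
  · left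
    obtain ⟨t, f, h1, h2, h3⟩ := BarePaths.exists_bare_paths hT ℓ
    refine ⟨t, f, ?_, ?_, h3⟩
    · rw [hleaf, lt_div_iff₀ (by positivity)] at hfew
      rw [Fintype.card_fin] at h1
      have h1' : (n : ℝ) ≤ (ℓ + 1) * t
          + 2 * ℓ * ((Finset.univ.filter fun v => T.degree v = 1).card : ℝ) := by
        exact_mod_cast h1
      have ha : (0 : ℝ) ≤ ((Finset.univ.filter fun v => T.degree v = 1).card : ℝ) := by positivity
      have h4 : (n : ℝ) / 2 ≤ (ℓ + 1) * t := by nlinarith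
      have h5 : (1 / (4 * ((ℓ : ℝ) + 1))) / (2 * C) * n ≤ n / (8 * ((ℓ : ℝ) + 1)) := by
        rw [← hCγ]
        exact le_mul_of_one_le_left (by positivity) hC'
      refine h5.trans ?_
      rw [div_le_iff₀ (by positivity)]
      nlinarith
    · intro i
      refine ⟨(h2 i).1, (h2 i).2.1, fun w hw ha hb => ?_⟩
      rw [hnd]
      exact (h2 i).2.2 w hw ha hb
  · right
    refine ⟨hmany, ?_⟩
    set m := ⌊δ * n⌋₊ with hm
    have hm1 : 1 ≤ m := Nat.le_floor (by push_cast; linarith)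
    have hmle : (m : ℝ) ≤ δ * n := Nat.floor_le (by linarith)
    have hmge : δ * n / 2 ≤ m := by
      have := Nat.lt_floor_add_one (δ * n)
      linarith
    have hm0 : (0 : ℝ) < m := by exact_mod_cast hm1
    -- `K` segments of `m` vertices cover the tour, and `δ * K ≤ δ * (4 / δ + 1) ≤ 5`
    set K := ⌈2 * (n : ℝ) / m⌉₊ with hK
    have hKle : δ * K ≤ 5 := by
      have h1 : (K : ℝ) < 2 * (n : ℝ) / m + 1 := Nat.ceil_lt_add_one (by positivity)
      have h2 : 2 * (n : ℝ) / m ≤ 4 / δ := by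
        rw [div_le_div_iff₀ hm0 hδ0]
        linarith
      have h3 : δ * K ≤ δ * (4 / δ + 1) := by
        apply mul_le_mul_of_nonneg_left _ hδ0.le
        linarith
      have h4 : δ * (4 / δ + 1) = 4 + δ := by field_simp
      linarith
    have hKm : 2 * n ≤ K * m := by
      have h1 : 2 * (n : ℝ) / m ≤ K := Nat.le_ceil _
      rw [div_le_iff₀ hm0] at h1
      exact_mod_cast h1
    obtain ⟨S, hS, hSm, hSP⟩ := BarePaths.exists_subtree hT
      {v | ∃ u, (T.neighborSet u).ncard = 1 ∧ T.Adj u v} m K hm1 (by simpa using hKm)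
    refine ⟨S, hS, le_trans (by exact_mod_cast hSm) hmle, ?_⟩
    have hL := BarePaths.card_leaves_le _ hdeg
    set P : Set (Fin n) := {v | ∃ u, (T.neighborSet u).ncard = 1 ∧ T.Adj u v}
    have hSP' : (P.ncard : ℝ) ≤ K * ((S ∩ P).ncard : ℝ) := by exact_mod_cast hSP
    have hP : 5 * C * Real.log n ≤ δ * P.ncard := by
      have h1 := hmany.trans hL
      have e : (P.ncard : ℝ) * (1 / (4 * ((ℓ : ℝ) + 1)) * δ / (10 * C) * n / Real.log n) =
          n / (8 * ((ℓ : ℝ) + 1)) * (δ * P.ncard / (5 * C * Real.log n)) := by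
        field_simp
        ring
      rw [e] at h1
      have h2 : (1 : ℝ) ≤ δ * P.ncard / (5 * C * Real.log n) :=
        le_of_mul_le_mul_left (by simpa using h1) (by positivity : 0 < n / (8 * ((ℓ : ℝ) + 1)))
      rwa [le_div_iff₀ (by positivity), one_mul] at h2
    have h6 : δ * P.ncard ≤ 5 * ((S ∩ P).ncard : ℝ) := by
      calc δ * P.ncard ≤ δ * (K * ((S ∩ P).ncard : ℝ)) := mul_le_mul_of_nonneg_left hSP' hδ0.le
        _ = δ * K * ((S ∩ P).ncard : ℝ) := by ring
        _ ≤ 5 * ((S ∩ P).ncard : ℝ) := mul_le_mul_of_nonneg_right hKle (by positivity)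
    linarith
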